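/- For every finite graph G and every tree decomposition (T,β) of G, there exists a rooted compact tree decomposition (T̂,β̂) of G such that every bag of (T̂,β̂) is a subset of some bag of (T,β) and every adhesion of (T̂,β̂) is a subset of some adhesion of (T,β). -/

import Mathlib

/-- An (unrooted) tree decomposition of `G`: a tree `T` together with bags `β` such
that bags cover all vertices and all edges, and for every vertex `v` the set of
nodes whose bag contains `v` is connected in `T` (witnessed by a walk all of whose
vertices carry `v` in their bags). -/
structure IsTreeDecomp {V ι : Type} (G : SimpleGraph V) (T : SimpleGraph ι)
    (β : ι → Set V) : Prop where
  isTree : T.IsTree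
  exists_bag : ∀ v : V, ∃ t : ι, v ∈ β t
  adj_bag : ∀ u v : V, G.Adj u v → ∃ t : ι, u ∈ β t ∧ v ∈ β t
  bag_connected : ∀ (v : V) (t₁ t₂ : ι), v ∈ β t₁ → v ∈ β t₂ →
    ∃ p : T.Walk t₁ t₂, ∀ s ∈ p.support, v ∈ β s

/-- `s` is an ancestor of `t` (possibly `s = t`) with respect to the parent map. -/
def IsAncestor {ι : Type} (parent : ι → ι) (s t : ι) : Prop :=
  ∃ n : ℕ, parent^[n] t = s

/-- `s` lies on the (unique) path between `t₁` and `t₂` in the rooted tree given by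
`parent`. -/
def OnTreePath {ι : Type} (parent : ι → ι) (s t₁ t₂ : ι) : Prop :=
  (IsAncestor parent s t₁ ∨ IsAncestor parent s t₂) ∧
    ∀ u : ι, IsAncestor parent u t₁ → IsAncestor parent u t₂ → IsAncestor parent u s

/-- A rooted tree decomposition of `G`. -/
structure IsRootedTreeDecomp {V ι : Type} (G : SimpleGraph V) (root : ι)
    (parent : ι → ι) (β : ι → Set V) : Prop where
  parent_root : parent root = root
  reaches_root : ∀ t : ι, ∃ n : ℕ, parent^[n] t = root
  exists_bag : ∀ v : V, ∃ t : ι, v ∈ β t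
  adj_bag : ∀ u v : V, G.Adj u v → ∃ t : ι, u ∈ β t ∧ v ∈ β t
  bag_connected : ∀ (v : V) (t₁ t₂ s : ι), v ∈ β t₁ → v ∈ β t₂ →
    OnTreePath parent s t₁ t₂ → v ∈ β s

/-- The (open) neighborhood of a vertex set `X` in `G`. -/
def nbhd {V : Type} (G : SimpleGraph V) (X : Set V) : Set V :=
  {v | v ∉ X ∧ ∃ u ∈ X, G.Adj u v}

/-- `γ(t)`: union of the bags of `t` and all its descendants. -/
def gammaSet {V ι : Type} (parent : ι → ι) (β : ι → Set V) (t : ι) : Set V :=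
  {v | ∃ s : ι, IsAncestor parent t s ∧ v ∈ β s}

/-- `α(t) = γ(t) \ σ(t)`. -/
def alphaSet {V ι : Type} (parent : ι → ι) (β : ι → Set V) (t : ι) : Set V :=
  gammaSet parent β t \ (β t ∩ β (parent t))

/-- Compactness of a rooted tree decomposition: for every non-root node `t`,
`G[α(t)]` is connected and `N_G(α(t)) = σ(t)`. -/
def IsCompactRTD {V ι : Type} (G : SimpleGraph V) (root : ι) (parent : ι → ι)
    (β : ι → Set V) : Prop :=
  ∀ t : ι, t ≠ root → (G.induce (alphaSet parent β t)).Connected ∧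
    nbhd G (alphaSet parent β t) = β t ∩ β (parent t)

/-!
Root `T` anywhere. For a non-root node `t`, let `A t` be the set of vertices whose topmost bag lies
in the subtree at `t`. All edges leaving `A t` end in the adhesion of `t`. Splitting every node `t`
into one node `(t, C)` per connected component `C` of `G[A t]`, with bag `β t ∩ N[C]`, gives the
compact decomposition: the vertices strictly below `(t, C)` are exactly those of `C`, and its
adhesion shrinks to `N(C)`. Since `A t ⊆ A (parent t)`, each `C` lies in a unique component at the
parent, so the new nodes again form a rooted tree.
-/

namespace IsAncestor

variable {ι : Type} {parent : ι → ι} {root a b c : ι}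

lemma refl (parent : ι → ι) (a : ι) : IsAncestor parent a a := ⟨0, rfl⟩

lemma parent_self (parent : ι → ι) (a : ι) : IsAncestor parent (parent a) a := ⟨1, rfl⟩

lemma trans (hab : IsAncestor parent a b) (hbc : IsAncestor parent b c) :
    IsAncestor parent a c := by
  obtain ⟨n, rfl⟩ := hab
  obtain ⟨m, rfl⟩ := hbc
  exact ⟨n + m, Function.iterate_add_apply parent n m c⟩

lemma eq_or_isAncestor_parent (h : IsAncestor parent a b) :
    b = a ∨ IsAncestor parent a (parent b) := by
  obtain ⟨_ | n, hn⟩ := h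
  exacts [.inl hn, .inr ⟨n, hn⟩]

lemma eq_or_exists_child (h : IsAncestor parent a b) :
    b = a ∨ ∃ c ≠ a, parent c = a ∧ IsAncestor parent c b := by
  obtain ⟨n, hn⟩ := h
  induction n with
  | zero => exact .inl hn
  | succ n ih =>
    by_cases hna : parent^[n] b = a
    · exact ih hna
    · exact .inr ⟨_, hna, by rw [← hn, Function.iterate_succ_apply'], n, rfl⟩

lemma total (ha : IsAncestor parent a c) (hb : IsAncestor parent b c) :
    IsAncestor parent a b ∨ IsAncestor parent b a := by
  obtain ⟨n, rfl⟩ := ha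
  obtain ⟨m, rfl⟩ := hb
  rcases le_total n m with h | h
  · exact .inr ⟨m - n, by rw [← Function.iterate_add_apply, Nat.sub_add_cancel h]⟩
  · exact .inl ⟨n - m, by rw [← Function.iterate_add_apply, Nat.sub_add_cancel h]⟩

lemma eq_root (hroot : parent root = root) (h : IsAncestor parent a root) : a = root := by
  obtain ⟨n, rfl⟩ := h
  exact Function.iterate_fixed hroot n

lemma eq_root_of_isAncestor_parent (hroot : parent root = root)
    (h : IsAncestor parent a (parent a)) (hreach : IsAncestor parent root a) : a = root := by
  obtain ⟨k, hk⟩ := hreach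
  obtain ⟨n, hn⟩ := h
  have hperiod : parent^[n * k + k] a = a := by
    rw [← Nat.succ_mul, Function.iterate_mul]
    exact Function.iterate_fixed hn k
  rw [← hperiod, Function.iterate_add_apply, hk, Function.iterate_fixed hroot]

end IsAncestor

lemma OnTreePath.symm {ι : Type} {parent : ι → ι} {s t₁ t₂ : ι} (h : OnTreePath parent s t₁ t₂) :
    OnTreePath parent s t₂ t₁ :=
  ⟨h.1.symm, fun u h₂ h₁ => h.2 u h₁ h₂⟩

/-- `parent` is the map sending each vertex of the tree `T` to its neighbour in the direction of
`root`. As for the rooted tree decompositions, the root is its own parent. -/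
structure IsParentMap {ι : Type} (T : SimpleGraph ι) (root : ι) (parent : ι → ι) : Prop where
  parent_root : parent root = root
  adj_parent : ∀ t, t ≠ root → T.Adj t (parent t)
  eq_parent_or_eq_parent : ∀ ⦃x y⦄, T.Adj x y → y = parent x ∨ x = parent y

lemma exists_isParentMap {ι : Type} {T : SimpleGraph ι} (hT : T.IsTree) (root : ι) :
    ∃ parent, IsParentMap T root parent := by
  choose path hpath hunique using hT.existsUnique_path root
  refine ⟨fun t => (path t).penultimate, ?_, fun t ht => ?_, fun x y hxy => ?_⟩
  · rw [← hunique root .nil .nil]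
    rfl
  · exact ((path t).adj_penultimate (SimpleGraph.Walk.not_nil_of_ne ht.symm)).symm
  · by_cases hx : x ∈ (path y).support
    · exact .inr (hT.isAcyclic.eq_penultimate_of_adj_end (hpath y) hxy.symm hx)
    · have hy : y ∈ (path x).support :=
        hT.isAcyclic.mem_support_of_ne_mem_support_of_adj_of_isPath (hpath x) (hpath y) hxy hx
      exact .inl (hT.isAcyclic.eq_penultimate_of_adj_end (hpath x) hxy hy)

namespace IsParentMap

variable {ι : Type} {T : SimpleGraph ι} {root : ι} {parent : ι → ι}

lemma isAncestor_root (hp : IsParentMap T root parent) (hT : T.Connected) (t : ι) :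
    IsAncestor parent root t := by
  obtain ⟨w⟩ := hT.preconnected t root
  induction w with
  | nil => exact .refl _ _
  | @cons x y _ hxy _ ih =>
    have hy := ih hp
    rcases hp.eq_parent_or_eq_parent hxy with rfl | rfl
    · exact hy.trans (.parent_self _ _)
    · rcases hy.eq_or_isAncestor_parent with heq | h
      · rw [heq, hp.parent_root]
        exact .refl _ _
      · exact h

lemma isAncestor_of_parent_notMem_support (hp : IsParentMap T root parent) {c x y : ι}
    (w : T.Walk x y) (hc : IsAncestor parent c x) (hw : parent c ∉ w.support) :
    IsAncestor parent c y := by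
  induction w with
  | nil => exact hc
  | @cons x x' y hxx' w ih =>
    rw [SimpleGraph.Walk.support_cons, List.mem_cons, not_or] at hw
    refine ih ?_ hw.2
    rcases hp.eq_parent_or_eq_parent hxx' with rfl | rfl
    · refine hc.eq_or_isAncestor_parent.resolve_left ?_
      rintro rfl
      exact hw.2 w.start_mem_support
    · exact hc.trans (.parent_self _ _)

lemma mem_support_of_onTreePath (hp : IsParentMap T root parent) (hT : T.Connected) {s t₁ t₂ : ι}
    (h : OnTreePath parent s t₁ t₂) (w : T.Walk t₁ t₂) : s ∈ w.support := by
  wlog hs : IsAncestor parent s t₁ generalizing t₁ t₂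
  · simpa using this h.symm w.reverse (h.1.resolve_left hs)
  rcases hs.eq_or_exists_child with rfl | ⟨c, hcs, rfl, hct₁⟩
  · exact w.start_mem_support
  by_contra hw
  -- `w` cannot leave the subtree at `c`, so `c` is a common ancestor lying below `s = parent c`.
  have hcs' : IsAncestor parent c (parent c) :=
    h.2 c hct₁ (hp.isAncestor_of_parent_notMem_support w hct₁ hw)
  have hc : c = root :=
    hcs'.eq_root_of_isAncestor_parent hp.parent_root (hp.isAncestor_root hT c)
  exact hcs (hc ▸ hp.parent_root.symm)

end IsParentMap

lemma IsTreeDecomp.isRootedTreeDecomp {V ι : Type} {G : SimpleGraph V} {T : SimpleGraph ι}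
    {β : ι → Set V} {root : ι} {parent : ι → ι} (h : IsTreeDecomp G T β)
    (hp : IsParentMap T root parent) : IsRootedTreeDecomp G root parent β where
  parent_root := hp.parent_root
  reaches_root := hp.isAncestor_root h.isTree.connected
  exists_bag := h.exists_bag
  adj_bag := h.adj_bag
  bag_connected v t₁ t₂ s h₁ h₂ hs := by
    obtain ⟨w, hw⟩ := h.bag_connected v t₁ t₂ h₁ h₂
    exact hw s (hp.mem_support_of_onTreePath h.isTree.connected hs w)

section Components

variable {V : Type} {G : SimpleGraph V} {A C D : Set V} {u v : V}

/-- `C` is the vertex set of a connected component of `G[A]`, encoded as a maximal connected subset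
of `A` in order to stay in `Set V` rather than in the quotient `(G.induce A).ConnectedComponent`. -/
def IsComponentOn (G : SimpleGraph V) (A C : Set V) : Prop :=
  Maximal (fun D => D ⊆ A ∧ (G.induce D).Connected) C

lemma exists_isComponentOn_mem (G : SimpleGraph V) (hv : v ∈ A) :
    ∃ C, IsComponentOn G A C ∧ v ∈ C := by
  let S : Set (Set V) := {D | v ∈ D ∧ D ⊆ A ∧ (G.induce D).Connected}
  have hsingleton : {v} ∈ S := ⟨rfl, Set.singleton_subset_iff.2 hv, by simp⟩
  have hconn : (G.induce (⋃₀ S)).Connected :=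
    SimpleGraph.induce_sUnion_connected_of_pairwise_not_disjoint ⟨_, hsingleton⟩
      (fun hD hD' => ⟨v, hD.1, hD'.1⟩) (fun hD => hD.2.2)
  have hvS : v ∈ ⋃₀ S := ⟨{v}, hsingleton, rfl⟩
  exact ⟨⋃₀ S, ⟨⟨Set.sUnion_subset fun D hD => hD.2.1, hconn⟩,
    fun D hD hle => Set.subset_sUnion_of_mem ⟨hle hvS, hD⟩⟩, hvS⟩

lemma IsComponentOn.subset_of_connected (hC : IsComponentOn G A C) (hDA : D ⊆ A)
    (hD : (G.induce D).Connected) (hCD : (C ∩ D).Nonempty) : D ⊆ C :=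
  Set.subset_union_right.trans <| hC.le_of_ge
    ⟨Set.union_subset hC.prop.1 hDA,
      SimpleGraph.induce_union_connected hC.prop.2.preconnected hD.preconnected hCD⟩
    Set.subset_union_left

lemma IsComponentOn.mem_of_adj (hC : IsComponentOn G A C) (hu : u ∈ C) (hv : v ∈ A)
    (huv : G.Adj u v) : v ∈ C :=
  hC.subset_of_connected (Set.pair_subset (hC.prop.1 hu) hv)
    (SimpleGraph.induce_pair_connected_of_adj huv) ⟨u, hu, by simp⟩ (by simp)

/-- The closed neighbourhood `N[X] = X ∪ N(X)` of a vertex set. -/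
def closedNbhd (G : SimpleGraph V) (X : Set V) : Set V := X ∪ nbhd G X

lemma mem_closedNbhd_of_adj (hu : u ∈ C) (huv : G.Adj u v) : v ∈ closedNbhd G C :=
  or_iff_not_imp_left.2 fun hv => ⟨hv, u, hu, huv⟩

lemma closedNbhd_mono (h : C ⊆ D) : closedNbhd G C ⊆ closedNbhd G D := by
  rintro v (hv | ⟨-, u, hu, huv⟩)
  · exact .inl (h hv)
  · exact mem_closedNbhd_of_adj (h hu) huv

end Components

namespace IsRootedTreeDecomp

variable {V ι : Type} {G : SimpleGraph V} {root : ι} {parent : ι → ι} {β : ι → Set V}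
  {s t : ι} {u v : V} {C D : Set V}

lemma exists_top (h : IsRootedTreeDecomp G root parent β) (v : V) :
    ∃ t, v ∈ β t ∧ ∀ x, v ∈ β x → IsAncestor parent t x := by
  obtain ⟨t, ht, htop⟩ : ∃ t, v ∈ β t ∧ (t ≠ root → v ∉ β (parent t)) := by
    by_contra! hcon
    obtain ⟨t, ht⟩ := h.exists_bag v
    obtain ⟨n, hn⟩ := h.reaches_root t
    have hv : v ∈ β (parent^[n] t) :=
      Function.Iterate.rec (fun x => v ∈ β x) ht (fun x hx => (hcon x hx).2) n
    exact (hcon _ hv).1 hn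
  refine ⟨t, ht, fun x hx => ?_⟩
  by_cases htr : t = root
  · exact htr ▸ h.reaches_root x
  by_contra hnot
  have honPath : OnTreePath parent (parent t) t x := by
    refine ⟨.inl (.parent_self _ _), fun a hat hax => ?_⟩
    refine hat.eq_or_isAncestor_parent.resolve_left ?_
    rintro rfl
    exact hnot hax
  exact htop htr (h.bag_connected v t x _ ht hx honPath)

variable (h : IsRootedTreeDecomp G root parent β)

/-- The node closest to the root among those whose bags contain `v`. -/
noncomputable def top (v : V) : ι := (h.exists_top v).choose

lemma mem_top (v : V) : v ∈ β (h.top v) := (h.exists_top v).choose_spec.1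

lemma isAncestor_top (hv : v ∈ β t) : IsAncestor parent (h.top v) t :=
  (h.exists_top v).choose_spec.2 t hv

lemma mem_of_isAncestor (hv : v ∈ β t) (hst : IsAncestor parent s t)
    (htop : IsAncestor parent (h.top v) s) : v ∈ β s :=
  h.bag_connected v t (h.top v) s hv (h.mem_top v) ⟨.inl hst, fun _ _ hu => hu.trans htop⟩

/-- The vertices introduced in the subtree at `t`. For `t ≠ root` this is the set `α(t)`; at the
root it is all of `V`, whereas `alphaSet` removes the whole root bag because
`parent root = root`. -/
def interior (t : ι) : Set V := {v | IsAncestor parent t (h.top v)}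

lemma interior_anti (hst : IsAncestor parent s t) : h.interior t ⊆ h.interior s :=
  fun _ hv => hst.trans hv

lemma notMem_parent_of_mem_interior (ht : t ≠ root) (hv : v ∈ h.interior t) :
    v ∉ β (parent t) := fun hvp =>
  ht <| (hv.trans (h.isAncestor_top hvp)).eq_root_of_isAncestor_parent h.parent_root
    (h.reaches_root t)

lemma mem_adhesion_of_adj (hu : u ∈ h.interior t) (hv : v ∉ h.interior t) (huv : G.Adj u v) :
    v ∈ β t ∩ β (parent t) := by
  obtain ⟨s, hus, hvs⟩ := h.adj_bag u v huv
  have hts : IsAncestor parent t s := hu.trans (h.isAncestor_top hus)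
  have htop : IsAncestor parent (h.top v) t := ((h.isAncestor_top hvs).total hts).resolve_right hv
  have hvt : v ∈ β t := h.mem_of_isAncestor hvs hts htop
  have htop' : IsAncestor parent (h.top v) (parent t) := by
    refine htop.eq_or_isAncestor_parent.resolve_left fun heq => hv ?_
    exact heq ▸ .refl _ _
  exact ⟨hvt, h.mem_of_isAncestor hvt (.parent_self _ _) htop'⟩

/-- The vertex sets `C` for which `(t, C)` is a node of the compactification: the connected
components of `G[α(t)]`, except that the root is not split even if `G` is disconnected. -/
def IsPiece (t : ι) (C : Set V) : Prop :=
  (t = root ∧ C = Set.univ) ∨ (t ≠ root ∧ IsComponentOn G (h.interior t) C)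

variable {h}

lemma IsPiece.isComponentOn (hC : h.IsPiece t C) (ht : t ≠ root) :
    IsComponentOn G (h.interior t) C :=
  (hC.resolve_left fun hr => ht hr.1).2

lemma IsPiece.eq_univ (hC : h.IsPiece root C) : C = Set.univ :=
  (hC.resolve_right fun hr => hr.1 rfl).2

lemma IsPiece.mem_of_mem_closedNbhd (hC : h.IsPiece t C) (hvC : v ∈ closedNbhd G C)
    (hv : v ∈ h.interior t) : v ∈ C := by
  rcases hC with ⟨-, rfl⟩ | ⟨-, hC⟩
  · trivial
  · exact hvC.elim id fun ⟨_, u, hu, huv⟩ => hC.mem_of_adj hu hv huv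

lemma IsPiece.subset_of_isAncestor (hD : h.IsPiece s D) (hC : h.IsPiece t C)
    (hst : IsAncestor parent s t) (hvD : v ∈ D) (hvC : v ∈ C) : C ⊆ D := by
  rcases hD with ⟨-, rfl⟩ | ⟨hs, hD⟩
  · exact Set.subset_univ C
  have ht : t ≠ root := by
    rintro rfl
    exact hs (hst.eq_root h.parent_root)
  have hC := (hC.isComponentOn ht).prop
  exact hD.subset_of_connected (hC.1.trans (h.interior_anti hst)) hC.2 ⟨v, hvD, hvC⟩

variable (h) in
lemma exists_isPiece_mem (hv : v ∈ h.interior t) : ∃ C, h.IsPiece t C ∧ v ∈ C := by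
  by_cases ht : t = root
  · exact ⟨Set.univ, .inl ⟨ht, rfl⟩, trivial⟩
  · obtain ⟨C, hC, hvC⟩ := exists_isComponentOn_mem G hv
    exact ⟨C, .inr ⟨ht, hC⟩, hvC⟩

lemma IsPiece.exists_parent (hC : h.IsPiece t C) : ∃ D, h.IsPiece (parent t) D ∧ C ⊆ D := by
  by_cases ht : t = root
  · exact ⟨Set.univ, .inl ⟨ht ▸ h.parent_root, rfl⟩, Set.subset_univ C⟩
  have hcomp := (hC.isComponentOn ht).prop
  obtain ⟨v, hv⟩ := hcomp.2.nonempty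
  have hanc := IsAncestor.parent_self parent t
  obtain ⟨D, hD, hvD⟩ := h.exists_isPiece_mem (h.interior_anti hanc (hcomp.1 hv))
  exact ⟨D, hD, hD.subset_of_isAncestor hC hanc hvD hv⟩

end IsRootedTreeDecomp

/-- The nodes `(t, C)` of the compactification of a rooted tree decomposition. -/
@[ext]
structure CompactNode {V ι : Type} {G : SimpleGraph V} {root : ι} {parent : ι → ι}
    {β : ι → Set V} (h : IsRootedTreeDecomp G root parent β) where
  base : ι
  piece : Set V
  isPiece : h.IsPiece base piece

namespace CompactNode

variable {V ι : Type} {G : SimpleGraph V} {root : ι} {parent : ι → ι} {β : ι → Set V}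
  {h : IsRootedTreeDecomp G root parent β} {x y : CompactNode h} {s : ι} {v : V}

instance [Finite V] [Finite ι] : Finite (CompactNode h) :=
  Finite.of_injective (fun x => (x.base, x.piece)) fun _ _ hxy =>
    CompactNode.ext (congrArg Prod.fst hxy) (congrArg Prod.snd hxy)

/-- The root of the compactification, which carries all of `V`. -/
def rootNode (h : IsRootedTreeDecomp G root parent β) : CompactNode h :=
  ⟨root, Set.univ, .inl ⟨rfl, rfl⟩⟩

lemma eq_rootNode (hx : x.base = root) : x = rootNode h :=
  CompactNode.ext hx (hx ▸ x.isPiece).eq_univ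

lemma base_ne_root (hx : x ≠ rootNode h) : x.base ≠ root := fun hbase => hx (eq_rootNode hbase)

lemma isComponentOn_piece (hx : x ≠ rootNode h) :
    IsComponentOn G (h.interior x.base) x.piece :=
  x.isPiece.isComponentOn (base_ne_root hx)

lemma eq_of_mem_piece (hbase : x.base = y.base) (hx : v ∈ x.piece) (hy : v ∈ y.piece) : x = y :=
  CompactNode.ext hbase <| Set.Subset.antisymm
    (y.isPiece.subset_of_isAncestor x.isPiece (hbase ▸ .refl _ _) hy hx)
    (x.isPiece.subset_of_isAncestor y.isPiece (hbase ▸ .refl _ _) hx hy)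

/-- The parent of `(t, C)` is `(parent t, D)` for the piece `D` containing `C`. -/
noncomputable def parentNode (x : CompactNode h) : CompactNode h :=
  ⟨parent x.base, x.isPiece.exists_parent.choose, x.isPiece.exists_parent.choose_spec.1⟩

lemma piece_subset_piece_parentNode (x : CompactNode h) : x.piece ⊆ x.parentNode.piece :=
  x.isPiece.exists_parent.choose_spec.2

lemma base_iterate_parentNode (n : ℕ) (x : CompactNode h) :
    (parentNode^[n] x).base = parent^[n] x.base :=
  Function.Semiconj.iterate_right (f := base) (fun _ => rfl) n x

lemma isAncestor_base (hxy : IsAncestor parentNode x y) : IsAncestor parent x.base y.base := by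
  obtain ⟨n, rfl⟩ := hxy
  exact ⟨n, (base_iterate_parentNode n y).symm⟩

lemma piece_subset_of_isAncestor (hxy : IsAncestor parentNode x y) : y.piece ⊆ x.piece := by
  obtain ⟨n, rfl⟩ := hxy
  exact Function.Iterate.rec (fun z : CompactNode h => y.piece ⊆ z.piece) subset_rfl
    (fun z hz => hz.trans z.piece_subset_piece_parentNode) n

lemma exists_isAncestor_base_eq (hs : IsAncestor parent s x.base) :
    ∃ y : CompactNode h, y.base = s ∧ IsAncestor parentNode y x := by
  obtain ⟨n, rfl⟩ := hs
  exact ⟨_, base_iterate_parentNode n x, n, rfl⟩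

lemma isAncestor_rootNode (x : CompactNode h) : IsAncestor parentNode (rootNode h) x := by
  obtain ⟨y, hy, hyx⟩ := exists_isAncestor_base_eq (h.reaches_root x.base)
  exact eq_rootNode hy ▸ hyx

lemma isAncestor_of_mem_piece (hbase : IsAncestor parent x.base y.base) (hx : v ∈ x.piece)
    (hy : v ∈ y.piece) : IsAncestor parentNode x y := by
  obtain ⟨z, hz, hzy⟩ := exists_isAncestor_base_eq hbase
  exact eq_of_mem_piece hz (piece_subset_of_isAncestor hzy hy) hx ▸ hzy

lemma exists_topNode (h : IsRootedTreeDecomp G root parent β) (v : V) :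
    ∃ x : CompactNode h, x.base = h.top v ∧ v ∈ x.piece := by
  obtain ⟨C, hC, hv⟩ := h.exists_isPiece_mem (.refl parent (h.top v))
  exact ⟨⟨h.top v, C, hC⟩, rfl, hv⟩

/-- The bag `β t ∩ N[C]` of `(t, C)`. -/
def bag (x : CompactNode h) : Set V := β x.base ∩ closedNbhd G x.piece

lemma mem_bag_of_mem_piece (hbase : x.base = h.top v) (hv : v ∈ x.piece) : v ∈ x.bag :=
  ⟨hbase ▸ h.mem_top v, .inl hv⟩

lemma isAncestor_of_mem_bag (hbase : x.base = h.top v) (hv : v ∈ x.piece) (hvy : v ∈ y.bag) :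
    IsAncestor parentNode x y := by
  obtain ⟨z, hz, hzy⟩ := exists_isAncestor_base_eq (h.isAncestor_top hvy.1)
  have hvz : v ∈ z.piece :=
    z.isPiece.mem_of_mem_closedNbhd (closedNbhd_mono (piece_subset_of_isAncestor hzy) hvy.2)
      (hz ▸ .refl parent (h.top v))
  exact eq_of_mem_piece (hz.trans hbase.symm) hvz hv ▸ hzy

lemma mem_bag_of_isAncestor (hv : v ∈ y.bag) (hxy : IsAncestor parentNode x y)
    (htop : IsAncestor parent (h.top v) x.base) : v ∈ x.bag :=
  ⟨h.mem_of_isAncestor hv.1 (isAncestor_base hxy) htop,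
    closedNbhd_mono (piece_subset_of_isAncestor hxy) hv.2⟩

lemma exists_mem_bag_of_adj {u v : V} (huv : G.Adj u v) :
    ∃ x : CompactNode h, u ∈ x.bag ∧ v ∈ x.bag := by
  obtain ⟨t, hut, hvt⟩ := h.adj_bag u v huv
  wlog htop : IsAncestor parent (h.top u) (h.top v) generalizing u v
  · obtain ⟨x, hvx, hux⟩ := this huv.symm hvt hut
      (((h.isAncestor_top hut).total (h.isAncestor_top hvt)).resolve_left htop)
    exact ⟨x, hux, hvx⟩
  obtain ⟨x, hx, hvx⟩ := exists_topNode h v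
  have hux : u ∈ β x.base := hx ▸ h.mem_of_isAncestor hut (h.isAncestor_top hvt) htop
  exact ⟨x, ⟨hux, mem_closedNbhd_of_adj hvx huv.symm⟩, mem_bag_of_mem_piece hx hvx⟩

variable (h) in
lemma isRootedTreeDecomp : IsRootedTreeDecomp G (rootNode h) parentNode bag where
  parent_root := eq_rootNode h.parent_root
  reaches_root := isAncestor_rootNode
  exists_bag v := by
    obtain ⟨x, hx, hv⟩ := exists_topNode h v
    exact ⟨x, mem_bag_of_mem_piece hx hv⟩
  adj_bag _ _ := exists_mem_bag_of_adj
  bag_connected v t₁ t₂ s h₁ h₂ hs := by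
    obtain ⟨x, hx, hv⟩ := exists_topNode h v
    have hxs : IsAncestor parentNode x s :=
      hs.2 x (isAncestor_of_mem_bag hx hv h₁) (isAncestor_of_mem_bag hx hv h₂)
    have htop : IsAncestor parent (h.top v) s.base := hx ▸ isAncestor_base hxs
    exact hs.1.elim (mem_bag_of_isAncestor h₁ · htop) (mem_bag_of_isAncestor h₂ · htop)

lemma bag_inter_bag_parentNode (hx : x ≠ rootNode h) :
    x.bag ∩ x.parentNode.bag = nbhd G x.piece := by
  ext v
  constructor
  · rintro ⟨⟨-, hvx⟩, hvp, -⟩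
    refine hvx.resolve_left fun hv => ?_
    exact h.notMem_parent_of_mem_interior (base_ne_root hx) ((isComponentOn_piece hx).prop.1 hv) hvp
  · intro hv
    obtain ⟨hvx, u, hu, huv⟩ := id hv
    have hvN : v ∈ closedNbhd G x.piece := .inr hv
    have hvA : v ∉ h.interior x.base := fun hvA => hvx (x.isPiece.mem_of_mem_closedNbhd hvN hvA)
    obtain ⟨hvβ, hvβ'⟩ := h.mem_adhesion_of_adj ((isComponentOn_piece hx).prop.1 hu) hvA huv
    exact ⟨⟨hvβ, hvN⟩, hvβ', closedNbhd_mono x.piece_subset_piece_parentNode hvN⟩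

lemma alphaSet_eq_piece (hx : x ≠ rootNode h) : alphaSet parentNode bag x = x.piece := by
  rw [alphaSet, bag_inter_bag_parentNode hx]
  ext v
  constructor
  · rintro ⟨⟨y, hxy, hvy⟩, hv⟩
    exact (closedNbhd_mono (piece_subset_of_isAncestor hxy) hvy.2).resolve_right hv
  · intro hv
    obtain ⟨y, hy, hvy⟩ := exists_topNode h v
    have hxy : IsAncestor parentNode x y :=
      isAncestor_of_mem_piece (hy ▸ (isComponentOn_piece hx).prop.1 hv) hv hvy
    exact ⟨⟨y, hxy, mem_bag_of_mem_piece hy hvy⟩, fun hvN => hvN.1 hv⟩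

variable (h) in
lemma isCompactRTD : IsCompactRTD G (rootNode h) parentNode bag := fun x hx => by
  rw [alphaSet_eq_piece hx]
  exact ⟨(isComponentOn_piece hx).prop.2, (bag_inter_bag_parentNode hx).symm⟩

end CompactNode

theorem exists_compactification_general {V ι : Type} {G : SimpleGraph V} {T : SimpleGraph ι}
    {β : ι → Set V} (hdec : IsTreeDecomp G T β) :
    ∃ (κ : Type) (root : κ) (parent : κ → κ) (β' : κ → Set V),
      (Finite V → Finite ι → Finite κ) ∧
      IsRootedTreeDecomp G root parent β' ∧
      IsCompactRTD G root parent β' ∧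
      (∀ t : κ, ∃ s : ι, β' t ⊆ β s) ∧
      (∀ t : κ, t ≠ root → ∃ s₁ s₂ : ι, T.Adj s₁ s₂ ∧
        β' t ∩ β' (parent t) ⊆ β s₁ ∩ β s₂) := by
  obtain ⟨root⟩ := hdec.isTree.connected.nonempty
  obtain ⟨parent, hp⟩ := exists_isParentMap hdec.isTree root
  have h : IsRootedTreeDecomp G root parent β := hdec.isRootedTreeDecomp hp
  refine ⟨CompactNode h, .rootNode h, CompactNode.parentNode, CompactNode.bag,
    fun _ _ => inferInstance, CompactNode.isRootedTreeDecomp h, CompactNode.isCompactRTD h,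
    fun x => ⟨x.base, Set.inter_subset_left⟩, fun x hx => ?_⟩
  exact ⟨x.base, parent x.base, hp.adj_parent _ (CompactNode.base_ne_root hx),
    Set.inter_subset_inter Set.inter_subset_left Set.inter_subset_left⟩

/-- compactification: given any tree decomposition `(T,β)` of a finite
graph `G`, there is a rooted compact tree decomposition of `G` whose every bag is a
subset of some bag of `(T,β)` and whose every adhesion is a subset of some adhesion
of `(T,β)`. -/
theorem exists_compactification
    (V ι : Type) [Fintype V] [Fintype ι] (G : SimpleGraph V)
    (T : SimpleGraph ι) (β : ι → Set V) (hdec : IsTreeDecomp G T β) :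
    ∃ (κ : Type) (_ : Fintype κ) (root : κ) (parent : κ → κ) (β' : κ → Set V),
      IsRootedTreeDecomp G root parent β' ∧
      IsCompactRTD G root parent β' ∧
      (∀ t : κ, ∃ s : ι, β' t ⊆ β s) ∧
      (∀ t : κ, t ≠ root → ∃ s₁ s₂ : ι, T.Adj s₁ s₂ ∧
        β' t ∩ β' (parent t) ⊆ β s₁ ∩ β s₂) := by
  obtain ⟨κ, root, parent, β', hfin, h⟩ := exists_compactification_general hdec
  exact ⟨κ, @Fintype.ofFinite κ (hfin inferInstance inferInstance), root, parent, β', h⟩
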